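/- Let $d \ge 3$, let $0 < \sigma < d - 2$, and let $c > 0$. Then there exist constants $C > 0$ and $c' > 0$ depending only on $d, \sigma, c$ such that for all $t > 0$ and all $x, y \in \mathbb{R}^d$ with $|x| \ge \sqrt{t}$, $|y| \ge \sqrt{t}$, and $\tfrac12|y| \le |x| \le 2|y|$: $\int_0^t \left(\int_{|z| < \sqrt{t}} \frac{t^{\sigma/2}}{|z|^{2+\sigma}}\,dz\right) \bigl[s(t-s)\bigr]^{-\frac{d}{2}} \exp\left(-\frac{c\,t\,(|x|^2+|y|^2)}{s(t-s)}\right)ds \le C\, (|x|^2+|y|^2)^{-\frac{d}{2}} \exp\left(-\frac{c'(|x|^2+|y|^2)}{t}\right)$. -/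

import Mathlib

open MeasureTheory

/-!
The inner integral is explicit: it is a constant times `t ^ (d / 2 - 1)`. In the time integral
write `u = s (t - s)` and `R = ‖x‖ ^ 2 + ‖y‖ ^ 2`, and split the exponent `c t R` into two parts.
One part absorbs the singularity, since `u ^ (-p) * exp (-a / u)` is at most its maximum over
`u > 0`, attained at `u = a / p`; the other part gives the Gaussian factor, since `u ≤ t ^ 2 / 4`.
With `p = d / 2` the remaining powers of `t` cancel.
-/

section TimeIntegral

open Real

variable {p a b t u : ℝ}

lemma rpow_neg_mul_exp_neg_div_le (hp : 0 < p) (ha : 0 < a) (hu : 0 < u) :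
    u ^ (-p) * exp (-a / u) ≤ (p / (exp 1 * a)) ^ p := by
  have tangent : a / (p * u) ≤ exp (a / (p * u) - 1) := by
    linarith [add_one_le_exp (a / (p * u) - 1)]
  have inv_le : u⁻¹ ≤ p / (exp 1 * a) * exp (a / (p * u)) := calc
    u⁻¹ = p / a * (a / (p * u)) := by field_simp
    _ ≤ p / a * exp (a / (p * u) - 1) := by gcongr
    _ = p / (exp 1 * a) * exp (a / (p * u)) := by rw [exp_sub]; field_simp
  calc u ^ (-p) * exp (-a / u)
      = u⁻¹ ^ p * exp (-a / u) := by rw [inv_rpow hu.le, rpow_neg hu.le]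
    _ ≤ (p / (exp 1 * a) * exp (a / (p * u))) ^ p * exp (-a / u) := by gcongr
    _ = (p / (exp 1 * a)) ^ p * exp (a / (p * u) * p + -a / u) := by
        rw [mul_rpow (by positivity) (exp_pos _).le, ← exp_mul, exp_add, mul_assoc]
    _ = (p / (exp 1 * a)) ^ p := by
        have cancel : a / (p * u) * p + -a / u = 0 := by field_simp; ring
        rw [cancel, exp_zero, mul_one]

lemma rpow_neg_mul_exp_neg_add_div_le (hp : 0 < p) (ha : 0 < a) (hb : 0 ≤ b) (hu : 0 < u)
    (hut : u ≤ t ^ 2 / 4) :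
    u ^ (-p) * exp (-(a + b) / u) ≤ (p / (exp 1 * a)) ^ p * exp (-(4 * b) / t ^ 2) := by
  have exp_le : exp (-b / u) ≤ exp (-(4 * b) / t ^ 2) := by
    have ht : 0 < t ^ 2 := by linarith
    rw [exp_le_exp, div_le_div_iff₀ hu ht]
    linarith [mul_le_mul_of_nonneg_left hut hb]
  calc u ^ (-p) * exp (-(a + b) / u)
      = u ^ (-p) * exp (-a / u) * exp (-b / u) := by rw [mul_assoc, ← exp_add]; ring_nf
    _ ≤ (p / (exp 1 * a)) ^ p * exp (-(4 * b) / t ^ 2) :=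
        mul_le_mul (rpow_neg_mul_exp_neg_div_le hp ha hu) exp_le (exp_pos _).le (by positivity)

lemma lintegral_Ioo_rpow_neg_mul_exp_neg_add_div_le (hp : 0 < p) (ha : 0 < a) (hb : 0 ≤ b)
    (ht : 0 ≤ t) :
    (∫⁻ s in Set.Ioo 0 t,
        ENNReal.ofReal ((s * (t - s)) ^ (-p) * exp (-(a + b) / (s * (t - s))))) ≤
      ENNReal.ofReal (t * ((p / (exp 1 * a)) ^ p * exp (-(4 * b) / t ^ 2))) := by
  have pointwise : ∀ s ∈ Set.Ioo 0 t,
      ENNReal.ofReal ((s * (t - s)) ^ (-p) * exp (-(a + b) / (s * (t - s)))) ≤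
        ENNReal.ofReal ((p / (exp 1 * a)) ^ p * exp (-(4 * b) / t ^ 2)) := by
    rintro s ⟨hs, hst⟩
    refine ENNReal.ofReal_le_ofReal (rpow_neg_mul_exp_neg_add_div_le hp ha hb ?_ ?_)
    · exact mul_pos hs (sub_pos.2 hst)
    · linarith [sq_nonneg (t - 2 * s)]
  refine (setLIntegral_mono measurable_const pointwise).trans_eq ?_
  rw [setLIntegral_const, volume_Ioo, sub_zero, mul_comm, ENNReal.ofReal_mul ht]

lemma rpow_sub_one_mul_mul_div_rpow {k R : ℝ} (hp : 0 ≤ p) (hk : 0 ≤ k) (ht : 0 < t)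
    (hR : 0 ≤ R) :
    t ^ (p - 1) * (t * (p / (k * (t * R))) ^ p) = (p / k) ^ p * R ^ (-p) := by
  have rpow_split : (p / (k * (t * R))) ^ p = (p / k) ^ p * t ^ (-p) * R ^ (-p) := by
    rw [← div_div, ← div_div, div_rpow (by positivity) hR, div_rpow (by positivity) ht.le,
      rpow_neg ht.le, rpow_neg hR, div_eq_mul_inv, div_eq_mul_inv]
  have rpow_cancel : t ^ (p - 1) * t * t ^ (-p) = 1 := by
    rw [← rpow_add_one ht.ne', sub_add_cancel, ← rpow_add ht, add_neg_cancel, rpow_zero]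
  calc t ^ (p - 1) * (t * (p / (k * (t * R))) ^ p)
      = (p / k) ^ p * R ^ (-p) * (t ^ (p - 1) * t * t ^ (-p)) := by rw [rpow_split]; ring
    _ = (p / k) ^ p * R ^ (-p) := by rw [rpow_cancel, mul_one]

end TimeIntegral

section SpaceIntegral

open Metric Module

variable {E : Type*} [NormedAddCommGroup E] [NormedSpace ℝ E] [FiniteDimensional ℝ E]
  [Nontrivial E] [MeasurableSpace E] (μ : Measure E) [μ.IsAddHaarMeasure] {α σ r t : ℝ}

lemma finrank_div_sub_mul_measureReal_ball_pos (hα : α < finrank ℝ E) :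
    0 < finrank ℝ E / (finrank ℝ E - α) * μ.real (ball 0 1) := by
  have ball_pos : 0 < μ.real (ball (0 : E) 1) :=
    ENNReal.toReal_pos (measure_ball_pos μ 0 one_pos).ne' measure_ball_lt_top.ne
  exact mul_pos (div_pos (Nat.cast_pos.2 finrank_pos) (sub_pos.2 hα)) ball_pos

variable [BorelSpace E]

lemma integrableOn_ball_norm_rpow_neg (hα : α < finrank ℝ E) :
    IntegrableOn (fun z : E ↦ ‖z‖ ^ (-α)) (ball 0 r) μ := by
  refine integrableOn_ball_of_norm_le_rpow (C := 1) (α := α) finrank_pos hα ?_ ?_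
  · refine .of_forall fun z ↦ ?_
    rw [one_mul, Real.norm_of_nonneg (by positivity)]
  · exact (measurable_norm.pow_const _).aestronglyMeasurable

lemma integral_ball_fun_norm {F : Type*} [NormedAddCommGroup F] [NormedSpace ℝ F] (f : ℝ → F) :
    ∫ z in ball (0 : E) r, f ‖z‖ ∂μ =
      finrank ℝ E • μ.real (ball 0 1) • ∫ ρ in Set.Ioo 0 r, ρ ^ (finrank ℝ E - 1) • f ρ := by
  have indicator_norm : (ball (0 : E) r).indicator (fun z ↦ f ‖z‖) =
      fun z ↦ (Set.Iio r).indicator f ‖z‖ := by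
    ext z
    simp only [Set.indicator, mem_ball_zero_iff, Set.mem_Iio]
  rw [← integral_indicator measurableSet_ball, indicator_norm, integral_fun_norm_addHaar μ,
    ← Set.Ioi_inter_Iio, ← setIntegral_indicator measurableSet_Iio]
  simp only [Set.indicator_smul_apply]

lemma integral_ball_norm_rpow_neg (hα : α < finrank ℝ E) (hr : 0 ≤ r) :
    ∫ z in ball (0 : E) r, ‖z‖ ^ (-α) ∂μ =
      finrank ℝ E / (finrank ℝ E - α) * μ.real (ball 0 1) * r ^ (finrank ℝ E - α) := by
  have radial : ∫ ρ in Set.Ioo 0 r, ρ ^ (finrank ℝ E - 1) • ρ ^ (-α) =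
      r ^ (finrank ℝ E - α) / (finrank ℝ E - α) := calc
    _ = ∫ ρ in Set.Ioo 0 r, ρ ^ (finrank ℝ E - α - 1) := by
      refine setIntegral_congr_fun measurableSet_Ioo fun ρ hρ ↦ ?_
      rw [smul_eq_mul, ← Real.rpow_natCast, ← Real.rpow_add hρ.1, Nat.cast_pred finrank_pos]
      ring_nf
    _ = r ^ (finrank ℝ E - α) / (finrank ℝ E - α) := by
      rw [← integral_Ioc_eq_integral_Ioo, ← intervalIntegral.integral_of_le hr,
        integral_rpow (.inl (by linarith)), sub_add_cancel,
        Real.zero_rpow (sub_pos.2 hα).ne', sub_zero]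
  rw [integral_ball_fun_norm μ (· ^ (-α)), radial, nsmul_eq_mul, smul_eq_mul]
  ring

lemma lintegral_ball_sqrt_rpow_div_norm_rpow (hσ : σ < (finrank ℝ E : ℝ) - 2) (ht : 0 < t) :
    (∫⁻ z in {z : E | ‖z‖ < √t}, ENNReal.ofReal (t ^ (σ / 2) / ‖z‖ ^ (2 + σ)) ∂μ) =
      ENNReal.ofReal (finrank ℝ E / (finrank ℝ E - (2 + σ)) * μ.real (ball 0 1) *
        t ^ ((finrank ℝ E : ℝ) / 2 - 1)) := by
  have hα : 2 + σ < finrank ℝ E := by linarith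
  have rpow_scaling : t ^ (σ / 2) * √t ^ (finrank ℝ E - (2 + σ)) =
      t ^ ((finrank ℝ E : ℝ) / 2 - 1) := by
    rw [Real.sqrt_eq_rpow, ← Real.rpow_mul ht.le, ← Real.rpow_add ht]
    ring_nf
  have set_eq_ball : {z : E | ‖z‖ < √t} = ball 0 √t := by
    simp only [ball, dist_zero_right]
  have integrand_eq (z : E) :
      t ^ (σ / 2) / ‖z‖ ^ (2 + σ) = t ^ (σ / 2) * ‖z‖ ^ (-(2 + σ)) := by
    rw [Real.rpow_neg (norm_nonneg z), div_eq_mul_inv]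
  simp only [set_eq_ball, integrand_eq]
  rw [← ofReal_integral_eq_lintegral_ofReal
      ((integrableOn_ball_norm_rpow_neg μ hα).const_mul _) (.of_forall fun z ↦ by positivity),
    integral_const_mul, integral_ball_norm_rpow_neg μ hα t.sqrt_nonneg, ← rpow_scaling]
  ring_nf

end SpaceIntegral

open Module in
theorem duhamel_small_z_general {E : Type*} [NormedAddCommGroup E] [NormedSpace ℝ E]
    [FiniteDimensional ℝ E] [Nontrivial E] [MeasurableSpace E] [BorelSpace E]
    (μ : Measure E) [μ.IsAddHaarMeasure] {σ c c' : ℝ}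
    (hσ : σ < (finrank ℝ E : ℝ) - 2) (hc' : 0 ≤ c') (hcc' : c' < 4 * c) :
    ∃ C : ℝ, 0 < C ∧ ∀ t R : ℝ, 0 < t → 0 < R →
      (∫⁻ s in Set.Ioo (0 : ℝ) t,
          (∫⁻ z in {z : E | ‖z‖ < √t}, ENNReal.ofReal (t ^ (σ / 2) / ‖z‖ ^ (2 + σ)) ∂μ) *
          ENNReal.ofReal ((s * (t - s)) ^ (-(finrank ℝ E : ℝ) / 2) *
            Real.exp (-(c * t * R) / (s * (t - s))))) ≤
      ENNReal.ofReal (C * R ^ (-(finrank ℝ E : ℝ) / 2) * Real.exp (-(c' * R) / t)) := by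
  have hn : 0 < (finrank ℝ E : ℝ) / 2 := half_pos (Nat.cast_pos.2 finrank_pos)
  have hδ : 0 < c - c' / 4 := by linarith
  have hK := finrank_div_sub_mul_measureReal_ball_pos (E := E) (α := 2 + σ) μ (by linarith)
  set K : ℝ := finrank ℝ E / (finrank ℝ E - (2 + σ)) * μ.real (Metric.ball 0 1) with K_def
  refine ⟨K * ((finrank ℝ E : ℝ) / 2 / (Real.exp 1 * (c - c' / 4))) ^ ((finrank ℝ E : ℝ) / 2),
    by positivity, fun t R ht hR ↦ ?_⟩
  have exponent_split : c * t * R = (c - c' / 4) * (t * R) + c' / 4 * (t * R) := by ring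
  have gaussian : -(4 * (c' / 4 * (t * R))) / t ^ 2 = -(c' * R) / t := by field_simp
  have powers := rpow_sub_one_mul_mul_div_rpow hn.le
    (by positivity : 0 ≤ Real.exp 1 * (c - c' / 4)) ht hR.le
  rw [lintegral_ball_sqrt_rpow_div_norm_rpow μ hσ ht, ← K_def,
    lintegral_const_mul' _ _ ENNReal.ofReal_ne_top, exponent_split, neg_div]
  refine (mul_le_mul_right (lintegral_Ioo_rpow_neg_mul_exp_neg_add_div_le
    hn (by positivity) (by positivity) ht.le) _).trans_eq ?_
  rw [← ENNReal.ofReal_mul (by positivity), gaussian, mul_assoc K (_ ^ _) (_ ^ _), ← powers]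
  ring_nf

/-- Reduced form of the small-`z` Duhamel contribution: for `d ≥ 3`, `0 < σ < d-2`,
`c > 0`, there are `C, c' > 0` such that for `t > 0` and `|x|, |y| ≥ √t` with
`|x| ∼ |y|` (within a factor 2),
`∫₀^t (∫_{|z|<√t} t^{σ/2}/|z|^{2+σ} dz) [s(t-s)]^{-d/2}
    exp(-c t (|x|²+|y|²)/(s(t-s))) ds
  ≤ C (|x|²+|y|²)^{-d/2} exp(-c'(|x|²+|y|²)/t)`. -/
theorem duhamel_small_z (d : ℕ) (hd : 3 ≤ d) (σ c : ℝ)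
    (hσ0 : 0 < σ) (hσ : σ < (d : ℝ) - 2) (hc : 0 < c) :
    ∃ C c' : ℝ, 0 < C ∧ 0 < c' ∧ ∀ t : ℝ, 0 < t →
      ∀ x y : EuclideanSpace ℝ (Fin d),
        Real.sqrt t ≤ ‖x‖ → Real.sqrt t ≤ ‖y‖ →
        ‖y‖ / 2 ≤ ‖x‖ → ‖x‖ ≤ 2 * ‖y‖ →
      (∫⁻ s in Set.Ioo (0 : ℝ) t,
          (∫⁻ z in {z : EuclideanSpace ℝ (Fin d) | ‖z‖ < Real.sqrt t},
              ENNReal.ofReal (t ^ (σ / 2) / ‖z‖ ^ (2 + σ))) *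
          ENNReal.ofReal ((s * (t - s)) ^ (-(d : ℝ) / 2) *
            Real.exp (-(c * t * (‖x‖ ^ 2 + ‖y‖ ^ 2)) / (s * (t - s))))) ≤
      ENNReal.ofReal (C * (‖x‖ ^ 2 + ‖y‖ ^ 2) ^ (-(d : ℝ) / 2) *
        Real.exp (-(c' * (‖x‖ ^ 2 + ‖y‖ ^ 2)) / t)) := by
  have : NeZero d := ⟨by omega⟩
  obtain ⟨C, hC, bound⟩ := duhamel_small_z_general (volume : Measure (EuclideanSpace ℝ (Fin d)))
    (by rwa [finrank_euclideanSpace_fin]) hc.le (by linarith : c < 4 * c)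
  rw [finrank_euclideanSpace_fin] at bound
  refine ⟨C, c, hC, hc, fun t ht x y hx _ _ _ ↦ bound t _ ht ?_⟩
  have hx_pos : 0 < ‖x‖ := (Real.sqrt_pos.2 ht).trans_le hx
  positivity
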